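/- Let (X,f) be a TDS and φ: X → ℝ continuous. For any ergodic μ ∈ E(X,f), the limits defining SP_μ(f,φ) and SP'_μ(f,φ) exist and SP_μ(f,φ) = SP'_μ(f,φ) = h_μ(f) + ∫_X φ dμ. -/

import Mathlib

open MeasureTheory Filter Set
open scoped ENNReal NNReal

namespace Paper

variable {X : Type*}

/-- Birkhoff sum `S_n φ(x) = ∑_{i<n} φ(f^i x)`. -/
def birk (f : X → X) (φ : X → ℝ) (n : ℕ) (x : X) : ℝ :=
  ∑ i ∈ Finset.range n, φ (f^[i] x)

section Metric

variable [MetricSpace X]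

/-- The Bowen ball `B_n(x, ε) = {y : d_n(x,y) < ε}`. -/
def bowenBall (f : X → X) (x : X) (n : ℕ) (ε : ℝ) : Set X :=
  {y | ∀ i < n, dist (f^[i] x) (f^[i] y) < ε}

/-- The number of indices `0 ≤ j ≤ n-1` with `dist (f^j x, f^j y) > ε`. -/
noncomputable def sepCount (f : X → X) (ε : ℝ) (n : ℕ) (x y : X) : ℕ :=
  Nat.card {j : ℕ // j < n ∧ ε < dist (f^[j] x) (f^[j] y)}

/-- `A` is an `(n,ε)`-separated set. -/
def IsNSep (f : X → X) (n : ℕ) (ε : ℝ) (A : Set X) : Prop :=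
  ∀ x ∈ A, ∀ y ∈ A, x ≠ y → ∃ j < n, ε < dist (f^[j] x) (f^[j] y)

/-- `A` is a `(δ,n,ε)`-separated set. -/
def IsDeltaSep (f : X → X) (δ : ℝ) (n : ℕ) (ε : ℝ) (A : Set X) : Prop :=
  ∀ x ∈ A, ∀ y ∈ A, x ≠ y → δ * n ≤ (sepCount f ε n x y : ℝ)

end Metric

section Entropy

variable [MeasurableSpace X]

/-- A finite measurable partition of `X`. -/
def IsFinPartition (s : Finset (Set X)) : Prop :=
  (∀ A ∈ s, MeasurableSet A) ∧ ⋃₀ (s : Set (Set X)) = Set.univ ∧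
    (s : Set (Set X)).Pairwise Disjoint

/-- The entropy `H(μ, ⋁_{i<n} f^{-i} ξ)` of the `n`-th dynamical refinement of the
partition `s` (with the convention `0 · log 0 = 0`). -/
noncomputable def dynH (f : X → X) (μ : Measure X) (s : Finset (Set X)) (n : ℕ) : ℝ :=
  -∑ w : Fin n → {A // A ∈ s},
      (μ (⋂ i : Fin n, f^[(i : ℕ)] ⁻¹' ((w i : Set X)))).toReal *
        Real.log (μ (⋂ i : Fin n, f^[(i : ℕ)] ⁻¹' ((w i : Set X)))).toReal

/-- The Kolmogorov–Sinai entropy `h_μ(f)`, as an extended real: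
`sup_ξ lim_n H(μ, ξ^n)/n`. -/
noncomputable def ksEntropy (f : X → X) (μ : Measure X) : EReal :=
  ⨆ (s : Finset (Set X)) (_ : IsFinPartition s),
    Filter.atTop.liminf (fun n : ℕ => ((dynH f μ s n / n : ℝ) : EReal))

end Entropy

section Empiric

variable [MeasurableSpace X]

/-- The empiric measure `E_n(x) = (1/n) ∑_{k<n} δ_{f^k x}`. -/
noncomputable def empiric (f : X → X) (x : X) (n : ℕ) : Measure X :=
  (n : ℝ≥0∞)⁻¹ • ∑ k ∈ Finset.range n, Measure.dirac (f^[k] x)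

end Empiric

section WeakStar

variable [MeasurableSpace X] [TopologicalSpace X] [OpensMeasurableSpace X]

/-- The set `X_{n,F}` of points whose `n`-th empiric measure lies in `F ⊆ M(X)`
(where `M(X)`, the space of Borel probability measures, carries the weak-star topology). -/
def Xnf (f : X → X) (n : ℕ) (F : Set (ProbabilityMeasure X)) : Set X :=
  {x | ∃ h : IsProbabilityMeasure (empiric f x n),
        (⟨empiric f x n, h⟩ : ProbabilityMeasure X) ∈ F}

end WeakStar

section SepPressure

variable [MetricSpace X] [MeasurableSpace X] [OpensMeasurableSpace X]

/-- `P(F;φ,n,ε)`: the supremum of `∑_{x∈E} e^{S_nφ(x)}` over `(n,ε)`-separated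
subsets `E ⊆ X_{n,F}`. -/
noncomputable def Psep (f : X → X) (φ : X → ℝ) (F : Set (ProbabilityMeasure X))
    (n : ℕ) (ε : ℝ) : ℝ≥0∞ :=
  ⨆ (E : Finset X) (_ : ↑E ⊆ Xnf f n F ∧ IsNSep f n ε ↑E),
    ∑ x ∈ E, ENNReal.ofReal (Real.exp (birk f φ n x))

/-- `P(F;φ,δ,n,ε)`: the analogue of `P(F;φ,n,ε)` with `(δ,n,ε)`-separated sets. -/
noncomputable def PsepDelta (f : X → X) (φ : X → ℝ) (F : Set (ProbabilityMeasure X))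
    (δ : ℝ) (n : ℕ) (ε : ℝ) : ℝ≥0∞ :=
  ⨆ (E : Finset X) (_ : ↑E ⊆ Xnf f n F ∧ IsDeltaSep f δ n ε ↑E),
    ∑ x ∈ E, ENNReal.ofReal (Real.exp (birk f φ n x))

/-- `SP̄_ν(f,φ) = lim_{ε→0} inf_{F∋ν} limsup_n (1/n) log P(F;φ,n,ε)`
(the limit in `ε` being a supremum by monotonicity). -/
noncomputable def SPbar (f : X → X) (φ : X → ℝ) (ν : ProbabilityMeasure X) : EReal :=
  ⨆ (ε : ℝ) (_ : 0 < ε), ⨅ (F : Set (ProbabilityMeasure X)) (_ : F ∈ nhds ν),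
    Filter.atTop.limsup (fun n : ℕ => (((n : ℝ)⁻¹ : ℝ) : EReal) * (Psep f φ F n ε).log)

/-- `S̲P_ν(f,φ) = lim_{ε→0} inf_{F∋ν} liminf_n (1/n) log P(F;φ,n,ε)`. -/
noncomputable def SPlow (f : X → X) (φ : X → ℝ) (ν : ProbabilityMeasure X) : EReal :=
  ⨆ (ε : ℝ) (_ : 0 < ε), ⨅ (F : Set (ProbabilityMeasure X)) (_ : F ∈ nhds ν),
    Filter.atTop.liminf (fun n : ℕ => (((n : ℝ)⁻¹ : ℝ) : EReal) * (Psep f φ F n ε).log)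

/-- `SP̄'_ν(f,φ)`: as `SP̄_ν(f,φ)` but via `(δ,n,ε)`-separated sets, with the limit
`δ → 0` taken before `ε → 0` (both limits being suprema by monotonicity). -/
noncomputable def SPbar' (f : X → X) (φ : X → ℝ) (ν : ProbabilityMeasure X) : EReal :=
  ⨆ (ε : ℝ) (_ : 0 < ε), ⨆ (δ : ℝ) (_ : 0 < δ),
    ⨅ (F : Set (ProbabilityMeasure X)) (_ : F ∈ nhds ν),
      Filter.atTop.limsup (fun n : ℕ =>
        (((n : ℝ)⁻¹ : ℝ) : EReal) * (PsepDelta f φ F δ n ε).log)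

/-- `S̲P'_ν(f,φ)`. -/
noncomputable def SPlow' (f : X → X) (φ : X → ℝ) (ν : ProbabilityMeasure X) : EReal :=
  ⨆ (ε : ℝ) (_ : 0 < ε), ⨆ (δ : ℝ) (_ : 0 < δ),
    ⨅ (F : Set (ProbabilityMeasure X)) (_ : F ∈ nhds ν),
      Filter.atTop.liminf (fun n : ℕ =>
        (((n : ℝ)⁻¹ : ℝ) : EReal) * (PsepDelta f φ F δ n ε).log)

end SepPressure

end Paper

open Paper

/-!
Both inequalities are counting arguments about the names `ξ(x), ξ(f x), …, ξ(f^(n-1) x)` of orbits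
with respect to a labeling `ξ` of the points by the cells of a finite partition.

*Upper bound.* Take cells of diameter at most `ε` whose boundaries are `μ`-null, so that
`(n,ε)`-separated points have distinct names and the distribution of `q`-words depends continuously
on the measure near `μ`. If the empirical measure of `x` is close to `μ`, then the name of `x`,
cut into `q`-blocks, has probability at least about `exp (-n H_q / q)` for the product of the
`q`-word distribution of `μ`. Since probabilities add up to at most one, there are at most about
`exp (n H_q / q)` such names.

*Lower bound.* By the mean ergodic theorem the empirical measures converge to `μ` in probability, so
most points lie in `X_{n,F}`. Up to a set `U` of small measure the labels are determined by the
`ε`-neighborhood, and most points rarely visit `U`. Hence the names of the points in this large set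
lie in the Hamming balls around the names of a maximal `(δ,n,ε)`-separated subset. Hamming balls of
small relative radius have exponentially negligible cardinality, so a small separated set would
force `H(μ, ξ^n)` to be too small.
-/

namespace Paper

open scoped Topology Finset Function
open Real (negMulLog)

/-! ### Entropy of finite distributions -/

section FiniteEntropy

variable {Ω : Type*} [Fintype Ω] {p q : Ω → ℝ}

lemma sum_negMulLog_le_neg_sum_mul_log (hp : ∀ w, 0 ≤ p w) (hq : ∀ w, 0 < q w)
    (hqp : ∑ w, q w ≤ ∑ w, p w) :
    ∑ w, negMulLog (p w) ≤ -∑ w, p w * Real.log (q w) := by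
  have hterm (w : Ω) : negMulLog (p w) + p w * Real.log (q w) ≤ q w - p w := by
    rcases (hp w).eq_or_lt with h | h
    · simpa [← h] using (hq w).le
    · have hkl := mul_nonneg (hq w).le
        (InformationTheory.klFun_nonneg (div_nonneg (hp w) (hq w).le))
      have hexpand : q w * InformationTheory.klFun (p w / q w) =
          -(negMulLog (p w) + p w * Real.log (q w)) + q w - p w := by
        have := (hq w).ne'
        rw [InformationTheory.klFun, Real.log_div h.ne' this, negMulLog]
        field_simp
        ring
      linarith
  have hsum := Finset.sum_le_sum fun w (_ : w ∈ Finset.univ) => hterm w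
  rw [Finset.sum_add_distrib, Finset.sum_sub_distrib] at hsum
  linarith

lemma sum_negMulLog_le_of_sum_compl_le [DecidableEq Ω] (hp : ∀ w, 0 ≤ p w) (hp1 : ∑ w, p w = 1)
    {A : Finset Ω} (hA : A.Nonempty) {κ : ℝ} (hκ : ∑ w ∈ Aᶜ, p w ≤ κ) :
    ∑ w, negMulLog (p w) ≤
      Real.log 2 + Real.log #A + κ * Real.log (Fintype.card Ω) := by
  have hA1 : (1 : ℝ) ≤ #A := by exact_mod_cast hA.card_pos
  have hΩ : (1 : ℝ) ≤ Fintype.card Ω := hA1.trans (by exact_mod_cast A.card_le_univ)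
  -- Compare `p` with the average of the uniform distributions on `A` and on `Ω`.
  let q : Ω → ℝ := fun w => (if w ∈ A then (2 * #A : ℝ)⁻¹ else 0) + (2 * Fintype.card Ω : ℝ)⁻¹
  have hq (w : Ω) : 0 < q w := by
    dsimp only [q]
    split_ifs <;> positivity
  have hq1 : ∑ w, q w = 1 := by
    simp only [q, Finset.sum_add_distrib, Finset.sum_ite_mem, Finset.univ_inter, Finset.sum_const,
      Finset.card_univ, nsmul_eq_mul]
    field_simp
    norm_num
  have hlog (w : Ω) : -Real.log (q w) ≤
      Real.log 2 + Real.log #A + if w ∈ A then 0 else Real.log (Fintype.card Ω) := by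
    by_cases hw : w ∈ A
    · have hle : (2 * #A : ℝ)⁻¹ ≤ q w := by
        simp only [q, if_pos hw]
        exact le_add_of_nonneg_right (by positivity)
      have := Real.log_le_log (by positivity) hle
      rw [Real.log_inv, Real.log_mul two_ne_zero (by positivity)] at this
      rw [if_pos hw]
      linarith
    · have := Real.log_nonneg hA1
      simp only [q, if_neg hw, zero_add]
      rw [Real.log_inv, Real.log_mul two_ne_zero (by positivity)]
      linarith
  calc ∑ w, negMulLog (p w)
      ≤ ∑ w, p w * -Real.log (q w) := by
        simpa using sum_negMulLog_le_neg_sum_mul_log hp hq (hq1.trans hp1.symm).le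
    _ ≤ ∑ w, p w * (Real.log 2 + Real.log #A +
          if w ∈ A then 0 else Real.log (Fintype.card Ω)) :=
        Finset.sum_le_sum fun w _ => mul_le_mul_of_nonneg_left (hlog w) (hp w)
    _ = Real.log 2 + Real.log #A + (∑ w ∈ Aᶜ, p w) * Real.log (Fintype.card Ω) := by
        simp only [mul_add, Finset.sum_add_distrib, ← Finset.sum_mul, hp1, one_mul, mul_ite,
          mul_zero]
        rw [Finset.sum_mul, ← Finset.sum_compl_add_sum A]
        congr 1
        rw [Finset.sum_eq_zero (s := A) fun w hw => if_pos hw, add_zero]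
        exact Finset.sum_congr rfl fun w hw => if_neg (Finset.mem_compl.1 hw)
    _ ≤ _ := by gcongr

lemma exists_pos_neg_sum_mul_log_le (hp : ∀ w, 0 ≤ p w) (hp1 : ∑ w, p w = 1) {γ : ℝ}
    (hγ : 0 < γ) :
    ∃ q : Ω → ℝ, (∀ w, 0 < q w) ∧ ∑ w, q w = 1 ∧
      -∑ w, p w * Real.log (q w) ≤ ∑ w, negMulLog (p w) + γ := by
  obtain ⟨w₀, -⟩ := Finset.exists_ne_zero_of_sum_ne_zero (hp1.trans_ne one_ne_zero)
  have : Nonempty Ω := ⟨w₀⟩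
  have hexp : 0 < 1 - Real.exp (-γ) := by simpa using hγ
  let q : Ω → ℝ := fun w => Real.exp (-γ) * p w + (1 - Real.exp (-γ)) / Fintype.card Ω
  have hlog (w : Ω) : negMulLog (p w) + γ * p w ≥ -(p w * Real.log (q w)) := by
    rcases (hp w).eq_or_lt with h | h
    · simp [← h]
    · have hle : Real.exp (-γ) * p w ≤ q w := le_add_of_nonneg_right (by positivity)
      have := mul_le_mul_of_nonneg_left (Real.log_le_log (by positivity) hle) h.le
      rw [Real.log_mul (Real.exp_ne_zero _) h.ne', Real.log_exp] at this
      rw [negMulLog]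
      linarith
  refine ⟨q, fun w => add_pos_of_nonneg_of_pos (mul_nonneg (Real.exp_pos _).le (hp w))
    (by positivity), ?_, ?_⟩
  · simp only [q, Finset.sum_add_distrib, ← Finset.mul_sum, hp1, Finset.sum_const,
      Finset.card_univ, nsmul_eq_mul]
    field_simp
    ring
  · calc -∑ w, p w * Real.log (q w) = ∑ w, -(p w * Real.log (q w)) := by
          rw [Finset.sum_neg_distrib]
      _ ≤ ∑ w, (negMulLog (p w) + γ * p w) := Finset.sum_le_sum fun w _ => hlog w
      _ = ∑ w, negMulLog (p w) + γ := by
          rw [Finset.sum_add_distrib, ← Finset.mul_sum, hp1, mul_one]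

end FiniteEntropy

/-! ### Counting words -/

section Hamming

variable {ι S : Type*} [Fintype ι] [DecidableEq ι] [Fintype S] [DecidableEq S]

lemma sum_exp_neg_mul_hammingDist (w : ι → S) (τ : ℝ) :
    ∑ v : ι → S, Real.exp (-(τ * hammingDist v w)) =
      (1 + (Fintype.card S - 1) * Real.exp (-τ)) ^ Fintype.card ι := by
  have hprod (v : ι → S) : Real.exp (-(τ * hammingDist v w)) =
      ∏ i, if v i = w i then 1 else Real.exp (-τ) := by
    rw [Finset.prod_ite, Finset.prod_const_one, one_mul, Finset.prod_const, ← Real.exp_nat_mul,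
      hammingDist]
    congr 1
    ring
  have hfactor (c : S) :
      ∑ b, (if b = c then 1 else Real.exp (-τ)) = 1 + (Fintype.card S - 1) * Real.exp (-τ) := by
    rw [Fintype.sum_eq_add_sum_compl c, if_pos rfl, Finset.sum_congr rfl fun b hb =>
      if_neg (by simpa using hb), Finset.sum_const, Finset.card_compl, Finset.card_singleton,
      nsmul_eq_mul, Nat.cast_sub (Fintype.card_pos_iff.2 ⟨c⟩), Nat.cast_one]
  simp_rw [hprod]
  rw [← Fintype.piFinset_univ, ← Finset.prod_univ_sum (fun _ => Finset.univ)
    fun i b => if b = w i then 1 else Real.exp (-τ)]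
  simp_rw [hfactor]
  rw [Finset.prod_const, Finset.card_univ]

lemma card_hammingBall_le (w : ι → S) {τ : ℝ} (hτ : 0 ≤ τ) (R : ℝ) :
    (#{v : ι → S | (hammingDist v w : ℝ) ≤ R} : ℝ) ≤
      Real.exp (τ * R + Fintype.card ι * (Fintype.card S * Real.exp (-τ))) := by
  have hchernoff : #{v : ι → S | (hammingDist v w : ℝ) ≤ R} * Real.exp (-(τ * R)) ≤
      ∑ v : ι → S, Real.exp (-(τ * hammingDist v w)) :=
    calc _ = ∑ v : ι → S with (hammingDist v w : ℝ) ≤ R, Real.exp (-(τ * R)) := by simp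
      _ ≤ ∑ v : ι → S with (hammingDist v w : ℝ) ≤ R, Real.exp (-(τ * hammingDist v w)) :=
        Finset.sum_le_sum fun v hv => by
          have := (Finset.mem_filter.1 hv).2
          gcongr
      _ ≤ _ := Finset.sum_le_univ_sum_of_nonneg fun v => (Real.exp_pos _).le
  have hbase : 0 ≤ 1 + (Fintype.card S - 1) * Real.exp (-τ) := by
    have h1 : Real.exp (-τ) ≤ 1 := by simpa using hτ
    have h2 := mul_nonneg (Nat.cast_nonneg (α := ℝ) (Fintype.card S)) (Real.exp_pos (-τ)).le
    linarith
  calc (#{v : ι → S | (hammingDist v w : ℝ) ≤ R} : ℝ)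
      = Real.exp (τ * R) * (#{v : ι → S | (hammingDist v w : ℝ) ≤ R} * Real.exp (-(τ * R))) := by
        rw [mul_left_comm, ← Real.exp_add, add_neg_cancel, Real.exp_zero, mul_one]
    _ ≤ Real.exp (τ * R) * (1 + (Fintype.card S - 1) * Real.exp (-τ)) ^ Fintype.card ι := by
        rw [← sum_exp_neg_mul_hammingDist w]
        gcongr
    _ ≤ Real.exp (τ * R) * Real.exp (Fintype.card S * Real.exp (-τ)) ^ Fintype.card ι := by
        gcongr
        have := Real.add_one_le_exp (Fintype.card S * Real.exp (-τ))
        linarith [Real.exp_pos (-τ)]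
    _ = _ := by rw [← Real.exp_nat_mul, ← Real.exp_add]

variable (S) in
lemma exists_forall_card_hammingBall_le_exp {d : ℝ} (hd : 0 < d) :
    ∃ ρ > 0, ∀ (n : ℕ) (w : Fin n → S),
      (#{v : Fin n → S | (hammingDist v w : ℝ) ≤ ρ * n} : ℝ) ≤ Real.exp (n * d) := by
  obtain ⟨τ, hτS, hτ⟩ : ∃ τ : ℝ, Fintype.card S * Real.exp (-τ) < d / 2 ∧ 0 < τ := by
    have hlim : Tendsto (fun τ : ℝ => Fintype.card S * Real.exp (-τ)) atTop (𝓝 0) := by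
      simpa using Real.tendsto_exp_neg_atTop_nhds_zero.const_mul (Fintype.card S : ℝ)
    exact ((hlim.eventually_lt_const (half_pos hd)).and (eventually_gt_atTop 0)).exists
  refine ⟨d / (2 * τ), by positivity, fun n w => (card_hammingBall_le w hτ.le _).trans ?_⟩
  rw [Real.exp_le_exp, Fintype.card_fin]
  calc τ * (d / (2 * τ) * n) + n * (Fintype.card S * Real.exp (-τ))
      ≤ τ * (d / (2 * τ) * n) + n * (d / 2) := by gcongr
    _ = n * d := by
      field_simp
      ring

end Hamming

section Blocks

variable {X S : Type*} {f : X → X} {ξ : X → S} {n q j : ℕ}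

/-- The `ξ`-name of length `n` of the orbit of `x` under `f`, where `ξ` is a labeling of the points
of `X`, usually by the cells of a partition. -/
def word (f : X → X) (ξ : X → S) (n : ℕ) (x : X) : Fin n → S := fun i => ξ (f^[i] x)

lemma word_iterate_apply (i : ℕ) (x : X) (r : Fin q) :
    word f ξ q (f^[i] x) r = ξ (f^[i + r] x) := by
  rw [word, ← Function.iterate_add_apply, add_comm]

lemma word_eq_of_block_eq {x y : X} (hq : 0 < q) (hj : j < q) (hfirst : word f ξ q x = word f ξ q y)
    (hmid : ∀ l < n / q, word f ξ q (f^[j + l * q] x) = word f ξ q (f^[j + l * q] y))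
    (hlast : word f ξ q (f^[n / q * q] x) = word f ξ q (f^[n / q * q] y)) :
    word f ξ n x = word f ξ n y := by
  funext ⟨i, hi⟩
  have hn := Nat.div_add_mod' n q
  have hnq := Nat.mod_lt n hq
  change ξ (f^[i] x) = ξ (f^[i] y)
  by_cases hiq : i < q
  · exact congrFun hfirst ⟨i, hiq⟩
  by_cases hib : i < j + n / q * q
  · have hl : (i - j) / q < n / q := by
      rw [Nat.div_lt_iff_lt_mul hq]
      omega
    have hpos : j + (i - j) / q * q + (i - j) % q = i := by
      have := Nat.div_add_mod' (i - j) q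
      omega
    simpa only [word_iterate_apply, hpos] using congrFun (hmid _ hl) ⟨(i - j) % q, Nat.mod_lt _ hq⟩
  · have hpos : n / q * q + (i - n / q * q) = i := by omega
    simpa only [word_iterate_apply, hpos] using congrFun hlast ⟨i - n / q * q, by omega⟩

lemma sum_prod_word_le [Fintype S] {E : Finset X}
    (hq : 0 < q) (hE : InjOn (word f ξ n) E) {p : (Fin q → S) → ℝ}
    (hp : ∀ w, 0 ≤ p w) (hp1 : ∑ w, p w ≤ 1) (hj : j < q) :
    ∑ x ∈ E, ∏ l ∈ Finset.range (n / q), p (word f ξ q (f^[j + l * q] x)) ≤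
      (Fintype.card S : ℝ) ^ (2 * q) := by
  classical
  let blocks : X → (Fin q → S) × (Fin q → S) × (Fin (n / q) → Fin q → S) := fun x =>
    (word f ξ q x, word f ξ q (f^[n / q * q] x), fun l => word f ξ q (f^[j + l * q] x))
  have hinj : Set.InjOn blocks E := by
    intro x hx y hy hxy
    simp only [blocks, Prod.mk.injEq, funext_iff (f := fun _ : Fin (n / q) => _)] at hxy
    exact hE hx hy (word_eq_of_block_eq hq hj hxy.1 (fun l hl => hxy.2.2 ⟨l, hl⟩) hxy.2.1)
  calc ∑ x ∈ E, ∏ l ∈ Finset.range (n / q), p (word f ξ q (f^[j + l * q] x))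
      = ∑ t ∈ E.image blocks, ∏ l, p (t.2.2 l) := by
        rw [Finset.sum_image hinj]
        exact Finset.sum_congr rfl fun x _ =>
          Finset.prod_range fun l => p (word f ξ q (f^[j + l * q] x))
    _ ≤ ∑ t : (Fin q → S) × (Fin q → S) × (Fin (n / q) → Fin q → S), ∏ l, p (t.2.2 l) :=
        Finset.sum_le_univ_sum_of_nonneg fun t => Finset.prod_nonneg fun _ _ => hp _
    _ = (Fintype.card S : ℝ) ^ (2 * q) * (∑ w, p w) ^ (n / q) := by
        simp only [Fintype.sum_prod_type, ← Fintype.sum_pow, Finset.sum_const, Finset.card_univ,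
          Fintype.card_fun, Fintype.card_fin, nsmul_eq_mul, Nat.cast_pow, ← mul_assoc, ← pow_add,
          two_mul]
    _ ≤ (Fintype.card S : ℝ) ^ (2 * q) :=
        mul_le_of_le_one_right (by positivity)
          (pow_le_one₀ (Finset.sum_nonneg fun w _ => hp w) hp1)

lemma sum_range_sum_range_add_mul {M : Type*} [AddCommMonoid M] (G : ℕ → M) (b q : ℕ) :
    ∑ j ∈ Finset.range q, ∑ l ∈ Finset.range b, G (j + l * q) =
      ∑ i ∈ Finset.range (b * q), G i := by
  rw [Finset.sum_comm]
  induction b with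
  | zero => simp
  | succ b ih =>
    rw [Finset.sum_range_succ, ih, Nat.succ_mul, Finset.sum_range_add]
    simp only [add_comm]

lemma exists_sum_le_mul_sum_range_add_mul {G : ℕ → ℝ} (hG : ∀ i, G i ≤ 0) (n : ℕ) (hq : 0 < q) :
    ∃ j < q, ∑ i ∈ Finset.range n, G i ≤ q * ∑ l ∈ Finset.range (n / q), G (j + l * q) := by
  have hle : ∑ i ∈ Finset.range n, G i ≤ ∑ i ∈ Finset.range (n / q * q), G i := by
    rw [← Nat.div_add_mod' n q, Finset.sum_range_add, Nat.div_add_mod']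
    exact add_le_of_nonpos_right (Finset.sum_nonpos fun i _ => hG _)
  have hsum : ∑ _j ∈ Finset.range q, (∑ i ∈ Finset.range n, G i) ≤
      ∑ j ∈ Finset.range q, q * ∑ l ∈ Finset.range (n / q), G (j + l * q) := by
    rw [Finset.sum_const, Finset.card_range, nsmul_eq_mul, ← Finset.mul_sum,
      sum_range_sum_range_add_mul]
    gcongr
  obtain ⟨j, hj, hle⟩ := Finset.exists_le_of_sum_le (Finset.nonempty_range_iff.2 hq.ne') hsum
  exact ⟨j, Finset.mem_range.1 hj, hle⟩

lemma card_le_of_le_birk_log_word [Fintype S] {E : Finset X}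
    (hq : 0 < q) (hE : InjOn (word f ξ n) E) {p : (Fin q → S) → ℝ}
    (hp : ∀ w, 0 < p w) (hp1 : ∑ w, p w ≤ 1) {a : ℝ}
    (ha : ∀ x ∈ E, -(q * (n * a)) ≤ birk f (fun y => Real.log (p (word f ξ q y))) n x) :
    (#E : ℝ) ≤ q * Fintype.card S ^ (2 * q) * Real.exp (n * a) := by
  have hlog (w : Fin q → S) : Real.log (p w) ≤ 0 :=
    Real.log_nonpos (hp w).le
      ((Finset.single_le_sum (fun w _ => (hp w).le) (Finset.mem_univ w)).trans hp1)
  have hphase : ∀ x ∈ E, Real.exp (-(n * a)) ≤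
      ∑ j ∈ Finset.range q, ∏ l ∈ Finset.range (n / q), p (word f ξ q (f^[j + l * q] x)) := by
    intro x hx
    obtain ⟨j, hj, hsum⟩ := exists_sum_le_mul_sum_range_add_mul
      (G := fun i => Real.log (p (word f ξ q (f^[i] x)))) (fun i => hlog _) n hq
    have hj' : -(n * a) ≤ ∑ l ∈ Finset.range (n / q), Real.log (p (word f ξ q (f^[j + l * q] x))) :=
      le_of_mul_le_mul_left (by simpa only [mul_neg] using (ha x hx).trans hsum) (Nat.cast_pos.2 hq)
    calc Real.exp (-(n * a))
        ≤ ∏ l ∈ Finset.range (n / q), p (word f ξ q (f^[j + l * q] x)) := by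
          refine (Real.exp_le_exp.2 hj').trans_eq ?_
          rw [Real.exp_sum]
          exact Finset.prod_congr rfl fun l _ => Real.exp_log (hp _)
      _ ≤ _ := Finset.single_le_sum
          (f := fun j => ∏ l ∈ Finset.range (n / q), p (word f ξ q (f^[j + l * q] x)))
          (fun _ _ => Finset.prod_nonneg fun _ _ => (hp _).le) (Finset.mem_range.2 hj)
  have hcard : #E * Real.exp (-(n * a)) ≤ q * (Fintype.card S : ℝ) ^ (2 * q) :=
    calc #E * Real.exp (-(n * a)) = ∑ _x ∈ E, Real.exp (-(n * a)) := by simp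
      _ ≤ _ := Finset.sum_le_sum hphase
      _ = _ := Finset.sum_comm
      _ ≤ ∑ _j ∈ Finset.range q, (Fintype.card S : ℝ) ^ (2 * q) :=
        Finset.sum_le_sum fun j hj =>
          sum_prod_word_le hq hE (fun w => (hp w).le) hp1 (Finset.mem_range.1 hj)
      _ = _ := by simp
  rwa [Real.exp_neg, ← div_eq_mul_inv, div_le_iff₀ (Real.exp_pos _)] at hcard

end Blocks

/-! ### The mean ergodic theorem for empirical measures -/

section Koopman

variable {X : Type*} [MeasurableSpace X] {f : X → X} {μ : Measure X} {g : X → ℝ}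

/-- The Koopman operator `g ↦ g ∘ f` on `L²(μ)`. -/
noncomputable def koopman (hf : MeasurePreserving f μ μ) : Lp ℝ 2 μ →L[ℝ] Lp ℝ 2 μ :=
  (Lp.compMeasurePreservingₗᵢ ℝ f hf).toContinuousLinearMap

lemma koopman_iterate_toLp (hf : MeasurePreserving f μ μ) (hg : MemLp g 2 μ) (k : ℕ) :
    (koopman hf)^[k] (hg.toLp g) =
      (hg.comp_measurePreserving (hf.iterate k)).toLp (g ∘ f^[k]) := by
  induction k with
  | zero => rfl
  | succ k ih => rw [Function.iterate_succ_apply', ih]; rfl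

lemma coeFn_birkhoffAverage_koopman (hf : MeasurePreserving f μ μ) (hg : MemLp g 2 μ) (n : ℕ) :
    ((birkhoffAverage ℝ (koopman hf) _root_.id n (hg.toLp g) : Lp ℝ 2 μ) : X → ℝ) =ᵐ[μ]
      birkhoffAverage ℝ f g n := by
  simp only [birkhoffAverage, birkhoffSum, id, koopman_iterate_toLp hf hg]
  filter_upwards [Lp.coeFn_smul (n : ℝ)⁻¹ (∑ k ∈ Finset.range n,
      (hg.comp_measurePreserving (hf.iterate k)).toLp (g ∘ f^[k])),
    Lp.coeFn_finsetSum (Finset.range n) fun k =>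
      (hg.comp_measurePreserving (hf.iterate k)).toLp (g ∘ f^[k]),
    ae_all_iff.2 fun k => (hg.comp_measurePreserving (hf.iterate k)).coeFn_toLp]
    with x hsmul hsum hiter
  rw [hsmul, Pi.smul_apply, hsum]
  simp [hiter, birkhoffAverage, birkhoffSum]

lemma eq_const_of_koopman_eq [IsFiniteMeasure μ] (herg : Ergodic f μ) {u : Lp ℝ 2 μ}
    (hu : koopman herg.toMeasurePreserving u = u) : ∃ c : ℝ, u = Lp.const 2 μ c := by
  have hcomp := Lp.coeFn_compMeasurePreserving u herg.toMeasurePreserving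
  rw [show Lp.compMeasurePreserving f herg.toMeasurePreserving u = u from hu] at hcomp
  obtain ⟨c, hc⟩ := herg.ae_eq_const_of_ae_eq_comp_ae (Lp.aestronglyMeasurable u) hcomp.symm
  exact ⟨c, Lp.ext (hc.trans (Lp.coeFn_const 2 μ c).symm)⟩

lemma orthogonalProjection_eqLocus_koopman [IsProbabilityMeasure μ] (herg : Ergodic f μ)
    (hg : MemLp g 2 μ) :
    (((koopman herg.toMeasurePreserving).eqLocus
      (1 : Lp ℝ 2 μ →L[ℝ] Lp ℝ 2 μ)).orthogonalProjectionOnto (hg.toLp g) : Lp ℝ 2 μ) =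
      Lp.const 2 μ (∫ x, g x ∂μ) := by
  refine Submodule.eq_starProjection_of_mem_of_inner_eq_zero ?_ fun w hw => ?_
  · exact Lp.toLp_compMeasurePreserving (memLp_const _) herg.toMeasurePreserving
  · obtain ⟨c, rfl⟩ := eq_const_of_koopman_eq herg hw
    rw [L2.inner_def]
    calc _ = ∫ x, c * (g x - ∫ y, g y ∂μ) ∂μ := by
          refine integral_congr_ae ?_
          filter_upwards [Lp.coeFn_sub (hg.toLp g) (Lp.const 2 μ (∫ x, g x ∂μ)), hg.coeFn_toLp,
            Lp.coeFn_const 2 μ (∫ x, g x ∂μ), Lp.coeFn_const 2 μ c] with x hsub hgx hmean hc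
          rw [hsub, hc, Pi.sub_apply, hgx, hmean]
          rfl
      _ = 0 := by
          rw [integral_const_mul, integral_sub (hg.integrable one_le_two) (integrable_const _)]
          simp

theorem tendstoInMeasure_birkhoffAverage [IsProbabilityMeasure μ] (herg : Ergodic f μ)
    (hg : MemLp g 2 μ) :
    TendstoInMeasure μ (birkhoffAverage ℝ f g) atTop fun _ => ∫ x, g x ∂μ := by
  have hlim := (koopman herg.toMeasurePreserving).tendsto_birkhoffAverage_orthogonalProjection
    (LinearIsometry.norm_toContinuousLinearMap_le _) (hg.toLp g)
  rw [orthogonalProjection_eqLocus_koopman herg hg] at hlim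
  exact (tendstoInMeasure_of_tendsto_Lp hlim).congr
    (coeFn_birkhoffAverage_koopman herg.toMeasurePreserving hg) (Lp.coeFn_const 2 μ _)

end Koopman

section Empirical

variable {X : Type*} [MeasurableSpace X] {f : X → X} {n : ℕ} {F G : Set (ProbabilityMeasure X)}

lemma isProbabilityMeasure_empiric (f : X → X) (x : X) {n : ℕ} (hn : n ≠ 0) :
    IsProbabilityMeasure (empiric f x n) where
  measure_univ := by
    simp [empiric, ENNReal.inv_mul_cancel (Nat.cast_ne_zero.2 hn) (ENNReal.natCast_ne_top n)]

lemma integral_empiric (f : X → X) (x : X) (n : ℕ) {g : X → ℝ} (hg : StronglyMeasurable g) :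
    ∫ y, g y ∂(empiric f x n) = (n : ℝ)⁻¹ * birk f g n x := by
  rw [empiric, integral_smul_measure, integral_finsetSum_measure fun i _ =>
    integrable_dirac' hg (by simp)]
  simp [birk, integral_dirac' _ _ hg]

lemma mem_Xnf_iff (hn : n ≠ 0) {x : X} :
    x ∈ Xnf f n F ↔
      (⟨empiric f x n, isProbabilityMeasure_empiric f x hn⟩ : ProbabilityMeasure X) ∈ F :=
  ⟨fun ⟨_, h⟩ => h, fun h => ⟨_, h⟩⟩

lemma mem_Xnf_setOf_integral_mem (hn : n ≠ 0) {g : X → ℝ} (hg : StronglyMeasurable g) {t : Set ℝ}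
    {x : X} :
    x ∈ Xnf f n {ρ | ∫ y, g y ∂(ρ : Measure X) ∈ t} ↔ (n : ℝ)⁻¹ * birk f g n x ∈ t := by
  rw [mem_Xnf_iff hn, ← integral_empiric f x n hg]
  rfl

lemma Xnf_mono (h : F ⊆ G) : Xnf f n F ⊆ Xnf f n G := fun _ ⟨hx, hF⟩ => ⟨hx, h hF⟩

lemma Xnf_empty : Xnf f n (∅ : Set (ProbabilityMeasure X)) = ∅ :=
  eq_empty_of_forall_notMem fun _ ⟨_, h⟩ => h

lemma Xnf_union : Xnf f n (F ∪ G) = Xnf f n F ∪ Xnf f n G := ext fun _ => exists_or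

lemma Xnf_compl (hn : n ≠ 0) : Xnf f n Fᶜ = (Xnf f n F)ᶜ :=
  ext fun _ => (mem_Xnf_iff hn).trans (mem_Xnf_iff hn).not.symm

lemma tendsto_measure_compl_Xnf [TopologicalSpace X] [OpensMeasurableSpace X]
    {ν : ProbabilityMeasure X} (herg : Ergodic f (ν : Measure X)) (hF : F ∈ 𝓝 ν) :
    Tendsto (fun n => (ν : Measure X) (Xnf f n F)ᶜ) atTop (𝓝 0) := by
  let p : Set (ProbabilityMeasure X) → Prop := fun C =>
    Tendsto (fun n => (ν : Measure X) (Xnf f n C)) atTop (𝓝 0)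
  -- `L` is the filter of sets that contain the empirical measures asymptotically almost surely.
  let L : Filter (ProbabilityMeasure X) := Filter.comk p (by simp [p, Xnf_empty])
    (fun t ht s hst => tendsto_of_tendsto_of_tendsto_of_le_of_le tendsto_const_nhds ht
      (fun _ => zero_le) fun n => measure_mono (Xnf_mono hst))
    (fun s hs t ht => by
      refine tendsto_of_tendsto_of_tendsto_of_le_of_le tendsto_const_nhds
        (by simpa using hs.add ht) (fun _ => zero_le) fun n => ?_
      rw [Xnf_union]
      exact measure_union_le _ _)
  suffices hL : Tendsto id L (𝓝 ν) by
    refine (show p Fᶜ from hL hF).congr' ?_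
    filter_upwards [eventually_ne_atTop 0] with n hn using by rw [Xnf_compl hn]
  refine ProbabilityMeasure.tendsto_iff_forall_integral_tendsto.2 fun g =>
    Metric.tendsto_nhds.2 fun ε hε => ?_
  have hmean := tendstoInMeasure_iff_dist.1 (tendstoInMeasure_birkhoffAverage herg
    (MemLp.of_bound g.continuous.aestronglyMeasurable ‖g‖ (.of_forall g.norm_coe_le_norm))) ε hε
  refine hmean.congr' ?_
  filter_upwards [eventually_ne_atTop 0] with n hn
  congr 1
  ext x
  have hmem := mem_Xnf_setOf_integral_mem (f := f) hn g.continuous.stronglyMeasurable (x := x)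
    (t := {a | ε ≤ dist a (∫ x, g x ∂(ν : Measure X))})
  rw [compl_ofPred]
  simp only [not_lt]
  exact hmem.symm

end Empirical

/-! ### Labelings and entropy -/

section Labelings

variable {X : Type*} [MeasurableSpace X] {S : Type*} [Fintype S] [MeasurableSpace S]
  [MeasurableSingletonClass S] {κ : X → S}

lemma sum_measureReal_fiber (hκ : Measurable κ) (μ : Measure X) [IsProbabilityMeasure μ] :
    ∑ a, μ.real (κ ⁻¹' {a}) = 1 := by
  rw [sum_measureReal_preimage_singleton _ fun a _ => hκ (measurableSet_singleton a)]
  simp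

lemma integral_comp_eq_sum_measureReal_fiber (hκ : Measurable κ) (μ : Measure X)
    [IsFiniteMeasure μ] (g : S → ℝ) :
    ∫ x, g (κ x) ∂μ = ∑ a, μ.real (κ ⁻¹' {a}) * g a := by
  rw [← integral_map hκ.aemeasurable .of_discrete, integral_fintype .of_finite]
  simp_rw [map_measureReal_apply hκ (measurableSet_singleton _), smul_eq_mul]

open Classical in
lemma isFinPartition_image_fibers (hκ : Measurable κ) :
    IsFinPartition (Finset.univ.image fun a => κ ⁻¹' {a}) := by
  refine ⟨?_, ?_, ?_⟩
  · simpa using fun a => hκ (measurableSet_singleton a)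
  · simp [← preimage_iUnion, iUnion_of_singleton]
  · simp only [Finset.coe_image, Finset.coe_univ, image_univ]
    rintro _ ⟨a, rfl⟩ _ ⟨b, rfl⟩ hab
    exact Disjoint.preimage κ (disjoint_singleton.2 fun h => hab (h ▸ rfl))

end Labelings

section Index

variable {X : Type*} [MeasurableSpace X] {s : Finset (Set X)}

lemma IsFinPartition.exists_mem (hs : IsFinPartition s) (x : X) : ∃ A : s, x ∈ (A : Set X) := by
  obtain ⟨A, hA, hx⟩ := hs.2.1.superset (mem_univ x)
  exact ⟨⟨A, hA⟩, hx⟩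

/-- The cell of the partition `s` that contains `x`, as a labeling of the points of `X`. -/
noncomputable def IsFinPartition.index (hs : IsFinPartition s) (x : X) : s :=
  (hs.exists_mem x).choose

lemma IsFinPartition.index_eq_iff (hs : IsFinPartition s) {x : X} {A : s} :
    hs.index x = A ↔ x ∈ (A : Set X) := by
  have hx := (hs.exists_mem x).choose_spec
  refine ⟨fun h => h ▸ hx, fun hA => Subtype.ext ?_⟩
  exact hs.2.2.eq (hs.index x).2 A.2 (not_disjoint_iff.2 ⟨x, hx, hA⟩)

lemma IsFinPartition.preimage_index (hs : IsFinPartition s) (A : s) :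
    hs.index ⁻¹' {A} = (A : Set X) := ext fun _ => hs.index_eq_iff

lemma IsFinPartition.measurable_index [MeasurableSpace s] (hs : IsFinPartition s) :
    Measurable hs.index :=
  measurable_to_countable' fun A => hs.preimage_index A ▸ hs.1 _ A.2

end Index

section WordEntropy

variable {X S : Type*} [MeasurableSpace X] {f : X → X} {ξ : X → S}

lemma measurable_word [MeasurableSpace S] (hf : Measurable f) (hξ : Measurable ξ) (n : ℕ) :
    Measurable (word f ξ n) :=
  measurable_pi_lambda _ fun i => hξ.comp (hf.iterate i)

/-- The Shannon entropy of the distribution of `ξ`-names of length `n` under `μ`. -/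
noncomputable def wordEntropy [Fintype S] (f : X → X) (μ : Measure X) (ξ : X → S) (n : ℕ) : ℝ :=
  ∑ w, negMulLog (μ.real (word f ξ n ⁻¹' {w}))

lemma dynH_eq_wordEntropy {s : Finset (Set X)} (hs : IsFinPartition s) (μ : Measure X) (n : ℕ) :
    dynH f μ s n = wordEntropy f μ hs.index n := by
  have hcell (w : Fin n → s) :
      ⋂ i : Fin n, f^[(i : ℕ)] ⁻¹' (w i : Set X) = word f hs.index n ⁻¹' {w} := by
    ext x
    simp [word, funext_iff, hs.index_eq_iff]
  simp only [dynH, wordEntropy, hcell, ← measureReal_def, negMulLog, neg_mul,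
    Finset.sum_neg_distrib]

lemma wordEntropy_le_of_forall_mem [Fintype S] [MeasurableSpace S] [MeasurableSingletonClass S]
    {μ : Measure X} [IsProbabilityMeasure μ] (hf : Measurable f) (hξ : Measurable ξ) {n : ℕ}
    {W : Finset (Fin n → S)} (hW : W.Nonempty) {G : Set X} (hG : ∀ x ∈ G, word f ξ n x ∈ W) {κ : ℝ}
    (hκ : μ.real Gᶜ ≤ κ) :
    wordEntropy f μ ξ n ≤
      Real.log 2 + Real.log #W + κ * (n * Real.log (Fintype.card S)) := by
  classical
  have hword := measurable_word hf hξ n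
  have hcompl : ∑ w ∈ Wᶜ, μ.real (word f ξ n ⁻¹' {w}) ≤ κ := by
    rw [sum_measureReal_preimage_singleton _ fun w _ => hword (measurableSet_singleton w)]
    refine (measureReal_mono fun x hx hxG => ?_).trans hκ
    simp [hG x hxG] at hx
  simpa [wordEntropy] using sum_negMulLog_le_of_sum_compl_le (fun _ => measureReal_nonneg)
    (sum_measureReal_fiber hword μ) hW hcompl

end WordEntropy

section NullFrontiers

variable {X : Type*}

lemma frontier_iInter_subset {ι : Type*} [Finite ι] [TopologicalSpace X] (s : ι → Set X) :
    frontier (⋂ i, s i) ⊆ ⋃ i, frontier (s i) := by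
  rintro x ⟨hcl, hint⟩
  rw [interior_iInter_of_finite, mem_iInter, not_forall] at hint
  obtain ⟨i, hi⟩ := hint
  exact mem_iUnion.2 ⟨i, closure_mono (iInter_subset s i) hcl, hi⟩

variable [MeasurableSpace X] {μ : Measure X}

lemma measure_frontier_fiber_pi_eq_zero {ι S : Type*} [Finite ι] [TopologicalSpace X]
    {κ : X → ι → S} (hκ : ∀ i a, μ (frontier {x | κ x i = a}) = 0) (w : ι → S) :
    μ (frontier (κ ⁻¹' {w})) = 0 := by
  have hfiber : κ ⁻¹' {w} = ⋂ i, {x | κ x i = w i} := by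
    ext x
    simp [funext_iff]
  rw [hfiber]
  exact measure_mono_null (frontier_iInter_subset _)
    (measure_iUnion_null fun i => hκ i (w i))

lemma measure_frontier_word_fiber_eq_zero [TopologicalSpace X] [OpensMeasurableSpace X] {f : X → X}
    (hf : Continuous f) (hμ : MeasurePreserving f μ μ) {S : Type*} {ξ : X → S}
    (hξ : ∀ a, μ (frontier (ξ ⁻¹' {a})) = 0) {n : ℕ} (w : Fin n → S) :
    μ (frontier (word f ξ n ⁻¹' {w})) = 0 := by
  refine measure_frontier_fiber_pi_eq_zero (fun i a => ?_) w
  refine measure_mono_null ((hf.iterate i).frontier_preimage_subset (ξ ⁻¹' {a})) ?_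
  rw [(hμ.iterate i).measure_preimage isClosed_frontier.measurableSet.nullMeasurableSet, hξ]

lemma exists_isFinPartition_null_frontier_dist_le {X : Type*} [PseudoMetricSpace X] [CompactSpace X]
    [MeasurableSpace X] [OpensMeasurableSpace X] (μ : Measure X) [SFinite μ] {ε : ℝ}
    (hε : 0 < ε) :
    ∃ s : Finset (Set X), IsFinPartition s ∧ (∀ A ∈ s, μ (frontier A) = 0) ∧
      ∀ A ∈ s, ∀ x ∈ A, ∀ y ∈ A, dist x y ≤ ε := by
  classical
  have hradius (z : X) : ∃ r ∈ Ioo 0 (ε / 2), μ (frontier (Metric.ball z r)) = 0 := by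
    simpa only [Metric.thickening_singleton] using
      exists_null_frontier_thickening μ {z} (half_pos hε)
  choose r hr hfr using hradius
  obtain ⟨t, ht⟩ := finite_cover_nhds fun z => Metric.ball_mem_nhds z (hr z).1
  -- Label a point by the set of balls of the cover that contain it.
  let κ : X → t → Prop := fun x z => x ∈ Metric.ball z.1 (r z)
  have hκ : Measurable κ := measurable_pi_lambda _ fun z =>
    measurableSet_setOfPred.1 measurableSet_ball
  refine ⟨_, isFinPartition_image_fibers hκ, ?_, ?_⟩
  · rw [Finset.forall_mem_image]
    refine fun w _ => measure_frontier_fiber_pi_eq_zero (fun z a => ?_) w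
    rcases Classical.propComplete a with rfl | rfl
    · simp only [κ, eq_iff_iff, iff_true]
      exact hfr z
    · simp only [κ, eq_iff_iff, iff_false]
      exact (frontier_compl (Metric.ball z.1 (r z))).symm ▸ hfr z
  · rw [Finset.forall_mem_image]
    intro w _ x hx y hy
    obtain ⟨z, hz, hxz⟩ := mem_iUnion₂.1 (ht.superset (mem_univ x))
    have hyz : y ∈ Metric.ball z (r z) := by
      have hxy : κ x = κ y := Eq.trans hx hy.symm
      exact (congrFun hxy ⟨z, hz⟩).mp hxz
    have := dist_triangle_right x y z
    have := (hr z).2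
    rw [Metric.mem_ball] at hxz hyz
    linarith

end NullFrontiers

/-! ### The upper bound -/

section UpperBound

lemma exists_pos_dynH_div_lt_of_ksEntropy_lt {X : Type*} [MeasurableSpace X] {f : X → X}
    {μ : Measure X} {a : ℝ} (ha : ksEntropy f μ < a)
    {s : Finset (Set X)} (hs : IsFinPartition s) : ∃ q > 0, dynH f μ s q / q < a := by
  have hliminf := (le_iSup₂ (f := fun (s : Finset (Set X)) (_ : IsFinPartition s) =>
    atTop.liminf fun n : ℕ => ((dynH f μ s n / n : ℝ) : EReal)) s hs).trans_lt ha
  obtain ⟨q, hq, hq0⟩ := ((frequently_lt_of_liminf_lt (by isBoundedDefault) hliminf).and_eventually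
    (eventually_gt_atTop 0)).exists
  exact ⟨q, hq0, EReal.coe_lt_coe_iff.1 hq⟩

lemma eventually_le_exp_natCast_mul (C : ℝ) {a : ℝ} (ha : 0 < a) :
    ∀ᶠ n : ℕ in atTop, C ≤ Real.exp (n * a) :=
  (Real.tendsto_exp_atTop.comp
    (tendsto_natCast_atTop_atTop.atTop_mul_const ha)).eventually_ge_atTop C

lemma tendsto_integral_comp_of_null_frontier {X S : Type*} [TopologicalSpace X]
    [MeasurableSpace X] [OpensMeasurableSpace X] [HasOuterApproxClosed X] [Finite S]
    [MeasurableSpace S] [MeasurableSingletonClass S] {κ : X → S} (hκ : Measurable κ)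
    {ν : ProbabilityMeasure X} (hν : ∀ a, (ν : Measure X) (frontier (κ ⁻¹' {a})) = 0)
    (g : S → ℝ) :
    Tendsto (fun ρ : ProbabilityMeasure X => ∫ x, g (κ x) ∂(ρ : Measure X)) (𝓝 ν)
      (𝓝 (∫ x, g (κ x) ∂(ν : Measure X))) := by
  cases nonempty_fintype S
  simp_rw [integral_comp_eq_sum_measureReal_fiber hκ]
  refine tendsto_finsetSum _ fun a _ => Tendsto.mul_const _ ?_
  exact (ENNReal.tendsto_toReal (measure_ne_top _ _)).comp
    (ProbabilityMeasure.tendsto_measure_of_null_frontier_of_tendsto' tendsto_id (hν a))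

variable {X : Type*} [MetricSpace X] {f : X → X} {n : ℕ} {ε : ℝ}

lemma IsNSep.injOn_word {S : Type*} {ξ : X → S} {E : Set X} (hE : IsNSep f n ε E)
    (hξ : ∀ x y, ξ x = ξ y → dist x y ≤ ε) : InjOn (word f ξ n) E := by
  intro x hx y hy hxy
  by_contra hne
  obtain ⟨j, hj, hlt⟩ := hE x hx y hy hne
  exact hlt.not_ge (hξ _ _ (congrFun hxy ⟨j, hj⟩))

variable [MeasurableSpace X] [BorelSpace X] {ν : ProbabilityMeasure X}

theorem exists_mem_nhds_forall_card_le_of_wordEntropy_lt {S : Type*} [Fintype S]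
    [MeasurableSpace S] [MeasurableSingletonClass S] (hf : Continuous f)
    (hν : MeasurePreserving f (ν : Measure X) ν) {ξ : X → S} (hξ : Measurable ξ)
    (hfr : ∀ a, (ν : Measure X) (frontier (ξ ⁻¹' {a})) = 0) {q : ℕ} (hq : 0 < q) {a : ℝ}
    (ha : wordEntropy f ν ξ q < q * a) :
    ∃ F ∈ 𝓝 ν, ∀ n ≠ 0, ∀ E : Finset X, ↑E ⊆ Xnf f n F → InjOn (word f ξ n) E →
      (#E : ℝ) ≤ q * Fintype.card S ^ (2 * q) * Real.exp (n * a) := by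
  classical
  have hword := measurable_word hf.measurable hξ q
  obtain ⟨p, hp, hp1, hpH⟩ := exists_pos_neg_sum_mul_log_le (fun _ => measureReal_nonneg)
    (sum_measureReal_fiber hword ν) (half_pos (sub_pos.2 ha))
  let g : X → ℝ := fun x => Real.log (p (word f ξ q x))
  have hg : StronglyMeasurable g :=
    ((measurable_of_finite fun w => Real.log (p w)).comp hword).stronglyMeasurable
  have hgν : -(q * a) < ∫ x, g x ∂(ν : Measure X) := by
    rw [integral_comp_eq_sum_measureReal_fiber hword _ fun w => Real.log (p w)]
    have : wordEntropy f ν ξ q = ∑ w, negMulLog _ := rfl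
    linarith
  have hF := (tendsto_integral_comp_of_null_frontier hword
    (measure_frontier_word_fiber_eq_zero hf hν hfr) fun w => Real.log (p w)) (Ioi_mem_nhds hgν)
  refine ⟨_, hF, fun n hn E hE hinj =>
    card_le_of_le_birk_log_word hq hinj hp hp1.le fun x hx => ?_⟩
  have hn' : (0 : ℝ) < n := Nat.cast_pos.2 (Nat.pos_of_ne_zero hn)
  have hmean : -(q * a) < (n : ℝ)⁻¹ * birk f g n x :=
    (mem_Xnf_setOf_integral_mem hn hg).1 (hE hx)
  rw [lt_inv_mul_iff₀ hn'] at hmean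
  linarith

theorem exists_mem_nhds_eventually_card_le_of_ksEntropy_lt [CompactSpace X] (hf : Continuous f)
    (hν : MeasurePreserving f (ν : Measure X) ν) {a : ℝ} (ha : ksEntropy f (ν : Measure X) < a)
    (hε : 0 < ε) :
    ∃ F ∈ 𝓝 ν, ∀ᶠ n in atTop, ∀ E : Finset X, ↑E ⊆ Xnf f n F → IsNSep f n ε ↑E →
      (#E : ℝ) ≤ Real.exp (n * a) := by
  obtain ⟨s, hs, hfr, hdist⟩ := exists_isFinPartition_null_frontier_dist_le (ν : Measure X) hε
  let : MeasurableSpace s := ⊤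
  have hcell (x y : X) (hxy : hs.index x = hs.index y) : dist x y ≤ ε :=
    hdist _ (hs.index x).2 x (hs.index_eq_iff.1 rfl) y (hs.index_eq_iff.1 hxy.symm)
  obtain ⟨b, hb, hba⟩ := EReal.lt_iff_exists_real_btwn.1 ha
  obtain ⟨q, hq, hH⟩ := exists_pos_dynH_div_lt_of_ksEntropy_lt hb hs
  rw [dynH_eq_wordEntropy hs, div_lt_iff₀' (Nat.cast_pos.2 hq)] at hH
  obtain ⟨F, hF, hcard⟩ := exists_mem_nhds_forall_card_le_of_wordEntropy_lt hf hν
    hs.measurable_index (fun A => hs.preimage_index A ▸ hfr A A.2) hq hH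
  have hab : 0 < a - b := sub_pos.2 (EReal.coe_lt_coe_iff.1 hba)
  refine ⟨F, hF, ?_⟩
  filter_upwards [eventually_ne_atTop 0,
    eventually_le_exp_natCast_mul (q * Fintype.card s ^ (2 * q)) hab] with n hn hC E hE hsep
  calc (#E : ℝ) ≤ q * Fintype.card s ^ (2 * q) * Real.exp (n * b) :=
        hcard n hn E hE (hsep.injOn_word hcell)
    _ ≤ Real.exp (n * (a - b)) * Real.exp (n * b) := by gcongr
    _ = Real.exp (n * a) := by rw [← Real.exp_add]; ring_nf

end UpperBound

/-! ### The lower bound -/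

section Separation

lemma exists_finset_pairwise_maximal {α : Type*} {r : α → α → Prop} (hr : ∀ x y, r x y → r y x)
    {G : Set α} {N : ℕ} (hN : ∀ E : Finset α, ↑E ⊆ G → (E : Set α).Pairwise r → #E ≤ N) :
    ∃ E : Finset α, ↑E ⊆ G ∧ (E : Set α).Pairwise r ∧ ∀ x ∈ G, x ∉ E → ∃ y ∈ E, ¬ r x y := by
  classical
  let T : Set ℕ := {k | ∃ E : Finset α, ↑E ⊆ G ∧ (E : Set α).Pairwise r ∧ #E = k}
  have hbdd : BddAbove T := ⟨N, by rintro _ ⟨E, hEG, hE, rfl⟩; exact hN E hEG hE⟩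
  obtain ⟨_, ⟨E, hEG, hE, rfl⟩, hmax⟩ :=
    hbdd.exists_isGreatest_of_nonempty ⟨0, ∅, by simp, by simp, rfl⟩
  refine ⟨E, hEG, hE, fun x hx hxE => ?_⟩
  by_contra! hxr
  have hcard : #(insert x E) ≤ #E := hmax ⟨insert x E, by simp [insert_subset_iff, hx, hEG], by
    rw [Finset.coe_insert]
    exact hE.insert fun y hy _ => ⟨hxr y hy, hr _ _ (hxr y hy)⟩, rfl⟩
  rw [Finset.card_insert_of_notMem hxE] at hcard
  omega

variable {X : Type*} [MetricSpace X] {f : X → X} {δ ε : ℝ} {n : ℕ}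

lemma sepCount_eq_card_filter (f : X → X) (ε : ℝ) (n : ℕ) (x y : X) :
    sepCount f ε n x y = #{j ∈ Finset.range n | ε < dist (f^[j] x) (f^[j] y)} :=
  Nat.subtype_card _ (by simp)

lemma sepCount_comm (f : X → X) (ε : ℝ) (n : ℕ) (x y : X) :
    sepCount f ε n x y = sepCount f ε n y x := by
  simp only [sepCount, dist_comm]

lemma IsDeltaSep.isNSep {A : Set X} (hA : IsDeltaSep f δ n ε A) (hδ : 0 < δ) (hn : n ≠ 0) :
    IsNSep f n ε A := by
  intro x hx y hy hxy
  have hn' : (0 : ℝ) < n := Nat.cast_pos.2 (Nat.pos_of_ne_zero hn)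
  have hpos : 0 < sepCount f ε n x y :=
    Nat.cast_pos.1 ((mul_pos hδ hn').trans_le (hA x hx y hy hxy))
  obtain ⟨⟨j, hj⟩⟩ := (Nat.card_pos_iff.1 hpos).1
  exact ⟨j, hj⟩

lemma hammingDist_word_le {S : Type*} [DecidableEq S] {ξ : X → S} {U : Set X}
    (hξ : ∀ x ∉ U, ∀ y ∉ U, dist x y ≤ ε → ξ x = ξ y) (n : ℕ) (x y : X) :
    (hammingDist (word f ξ n x) (word f ξ n y) : ℝ) ≤
      birk f (U.indicator 1) n x + birk f (U.indicator 1) n y + sepCount f ε n x y := by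
  classical
  have hham : (hammingDist (word f ξ n x) (word f ξ n y) : ℝ) =
      ∑ j ∈ Finset.range n, if ξ (f^[j] x) ≠ ξ (f^[j] y) then (1 : ℝ) else 0 := by
    rw [hammingDist, ← Finset.sum_boole, Finset.sum_range]
    rfl
  rw [hham, sepCount_eq_card_filter, ← Finset.sum_boole, birk, birk, ← Finset.sum_add_distrib,
    ← Finset.sum_add_distrib]
  refine Finset.sum_le_sum fun j _ => ?_
  specialize hξ (f^[j] x)
  simp only [indicator_apply, Pi.one_apply]
  split_ifs <;> grind

lemma exists_pos_forall_lt_dist {ι : Type*} [Finite ι] {K : ι → Set X}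
    (hK : ∀ i, IsCompact (K i)) (hdisj : Pairwise (Disjoint on K)) :
    ∃ ε > 0, ∀ i j, i ≠ j → ∀ x ∈ K i, ∀ y ∈ K j, ε < dist x y := by
  have hev : ∀ᶠ ε in 𝓝[>] (0 : ℝ), ∀ p : ι × ι, p.1 ≠ p.2 →
      ∀ x ∈ K p.1, ∀ y ∈ K p.2, ε < dist x y := by
    rw [eventually_all]
    rintro ⟨i, j⟩
    rcases eq_or_ne i j with rfl | hij
    · simp
    obtain ⟨r, hr0, hr⟩ :=
      Metric.exists_pos_forall_lt_edist (hK i) (hK j).isClosed (hdisj hij)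
    filter_upwards [Ioo_mem_nhdsGT (NNReal.coe_pos.2 hr0)] with ε hε _ x hx y hy
    have hxy := hr x hx y hy
    rw [edist_nndist, ENNReal.coe_lt_coe, ← NNReal.coe_lt_coe, coe_nndist] at hxy
    exact hε.2.trans hxy
  obtain ⟨ε, hε, hε0⟩ := (hev.and self_mem_nhdsWithin).exists
  exact ⟨ε, hε0, fun i j => hε (i, j)⟩

lemma exists_measurableSet_lt_forall_dist_le_imp_eq [CompactSpace X] [MeasurableSpace X]
    [BorelSpace X] {S : Type*} [Finite S] [MeasurableSpace S] [MeasurableSingletonClass S]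
    {ξ : X → S} (hξ : Measurable ξ) (μ : Measure X) [IsFiniteMeasure μ] {η : ℝ≥0∞} (hη : η ≠ 0) :
    ∃ U, MeasurableSet U ∧ μ U < η ∧
      ∃ ε > 0, ∀ x ∉ U, ∀ y ∉ U, dist x y ≤ ε → ξ x = ξ y := by
  have hcell (a : S) : MeasurableSet (ξ ⁻¹' {a}) := hξ (measurableSet_singleton a)
  obtain ⟨c, hc0, hcη⟩ := ENNReal.exists_pos_sum_of_countable hη S
  choose K hKξ hK hKc using fun a =>
    (hcell a).exists_isClosed_sdiff_lt (measure_ne_top μ _) (ENNReal.coe_ne_zero.2 (hc0 a).ne')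
  have hdisj : Pairwise (Disjoint on K) := fun a b hab =>
    (Disjoint.preimage ξ (disjoint_singleton.2 hab)).mono (hKξ a) (hKξ b)
  obtain ⟨ε, hε, hlt⟩ := exists_pos_forall_lt_dist (fun a => (hK a).isCompact) hdisj
  refine ⟨⋃ a, ξ ⁻¹' {a} \ K a, .iUnion fun a => (hcell a).diff (hK a).measurableSet,
    (measure_iUnion_le _).trans_lt ((ENNReal.tsum_le_tsum fun a => (hKc a).le).trans_lt hcη),
    ε, hε, fun x hx y hy hxy => ?_⟩
  simp only [mem_iUnion, Set.mem_sdiff, mem_preimage, mem_singleton_iff, exists_eq_left', not_not]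
    at hx hy
  by_contra hne
  exact hxy.not_gt (hlt _ _ hne x hx y hy)

end Separation

section Visits

variable {X : Type*} [MeasurableSpace X] {f : X → X} {μ : Measure X} {g : X → ℝ}

lemma integrable_birk (hf : MeasurePreserving f μ μ) (hg : Integrable g μ) (n : ℕ) :
    Integrable (birk f g n) μ :=
  integrable_finsetSum _ fun i _ => (hf.iterate i).integrable_comp_of_integrable hg

lemma integral_birk (hf : MeasurePreserving f μ μ) (hg : Integrable g μ) (n : ℕ) :
    ∫ x, birk f g n x ∂μ = n * ∫ x, g x ∂μ := by
  have hint (i : ℕ) : ∫ x, g (f^[i] x) ∂μ = ∫ x, g x ∂μ := by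
    have hi := hf.iterate i
    rw [← integral_map hi.aemeasurable (hi.map_eq.symm ▸ hg.aestronglyMeasurable), hi.map_eq]
  calc ∫ x, birk f g n x ∂μ = ∑ i ∈ Finset.range n, ∫ x, g (f^[i] x) ∂μ :=
        integral_finsetSum _ fun i _ => (hf.iterate i).integrable_comp_of_integrable hg
    _ = n * ∫ x, g x ∂μ := by simp [hint]

lemma mul_measureReal_le_birk_le_integral (hf : MeasurePreserving f μ μ) (hg : Integrable g μ)
    (hg0 : 0 ≤ g) {n : ℕ} (hn : n ≠ 0) (c : ℝ) :
    c * μ.real {x | c * n ≤ birk f g n x} ≤ ∫ x, g x ∂μ := by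
  have hn' : (0 : ℝ) < n := Nat.cast_pos.2 (Nat.pos_of_ne_zero hn)
  have hmarkov : c * n * μ.real {x | c * n ≤ birk f g n x} ≤ ∫ x, birk f g n x ∂μ :=
    mul_meas_ge_le_integral_of_nonneg
      (.of_forall fun x => Finset.sum_nonneg fun i _ => hg0 (f^[i] x))
      (integrable_birk hf hg n) (c * n)
  rw [integral_birk hf hg] at hmarkov
  exact le_of_mul_le_mul_left (by linarith) hn'

theorem eventually_measureReal_compl_le [TopologicalSpace X] [OpensMeasurableSpace X]
    {ν : ProbabilityMeasure X} (herg : Ergodic f (ν : Measure X))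
    {F : Set (ProbabilityMeasure X)} (hF : F ∈ 𝓝 ν) {U : Set X} (hU : MeasurableSet U)
    {δ κ : ℝ} (hδ : 0 < δ) (hκ : 0 < κ) (hUδ : (ν : Measure X).real U ≤ δ * (κ / 2)) :
    ∀ᶠ n : ℕ in atTop,
      (ν : Measure X).real (Xnf f n F ∩ {x | birk f (U.indicator 1) n x < δ * n})ᶜ ≤ κ := by
  have hX := (tendsto_measure_compl_Xnf herg hF).eventually
    (gt_mem_nhds (ENNReal.ofReal_pos.2 (half_pos hκ)))
  filter_upwards [hX, eventually_ne_atTop 0] with n hXn hn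
  have hvisit : (ν : Measure X).real {x | δ * n ≤ birk f (U.indicator 1) n x} ≤ κ / 2 := by
    have hint : Integrable (U.indicator (1 : X → ℝ)) ν := (integrable_const 1).indicator hU
    have := mul_measureReal_le_birk_le_integral herg.toMeasurePreserving hint
      (indicator_nonneg fun _ _ => zero_le_one) hn δ
    rw [integral_indicator_one hU] at this
    exact le_of_mul_le_mul_left (this.trans hUδ) hδ
  have hcompl : (Xnf f n F ∩ {x | birk f (U.indicator 1) n x < δ * n})ᶜ =
      (Xnf f n F)ᶜ ∪ {x | δ * n ≤ birk f (U.indicator 1) n x} := by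
    simp only [compl_inter, compl_ofPred, not_lt]
  calc _ ≤ (ν : Measure X).real (Xnf f n F)ᶜ
        + (ν : Measure X).real {x | δ * n ≤ birk f (U.indicator 1) n x} :=
        hcompl ▸ measureReal_union_le _ _
    _ ≤ κ / 2 + κ / 2 :=
        add_le_add (ENNReal.toReal_le_of_le_ofReal (half_pos hκ).le hXn.le) hvisit
    _ = κ := add_halves κ

end Visits

section LowerBound

lemma exists_pos_lt_one_mul_le (c : ℝ) {d : ℝ} (hd : 0 < d) : ∃ κ > 0, κ < 1 ∧ κ * c ≤ d := by
  have hlim : Tendsto (fun κ : ℝ => κ * c) (𝓝[>] 0) (𝓝 0) :=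
    ((continuous_mul_const c).tendsto' 0 0 (zero_mul c)).mono_left nhdsWithin_le_nhds
  obtain ⟨κ, hκc, hκ0, hκ1⟩ := ((hlim.eventually_le_const hd).and
    (Ioo_mem_nhdsGT one_pos)).exists
  exact ⟨κ, hκ0, hκ1, hκc⟩

variable {X S : Type*} [MeasurableSpace X] {f : X → X} [Fintype S]
  [MeasurableSpace S] [MeasurableSingletonClass S] {ξ : X → S}

lemma wordEntropy_le_of_forall_exists_hammingDist_le [DecidableEq S] {μ : Measure X}
    [IsProbabilityMeasure μ] (hf : Measurable f) (hξ : Measurable ξ) {n : ℕ} {ρ d : ℝ}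
    (hball : ∀ w : Fin n → S, (#{v | (hammingDist v w : ℝ) ≤ ρ * n} : ℝ) ≤ Real.exp (n * d))
    {G : Set X} (hGne : G.Nonempty) {κ : ℝ} (hG : μ.real Gᶜ ≤ κ) {E : Finset X}
    (hE : ∀ x ∈ G, ∃ y ∈ E, (hammingDist (word f ξ n x) (word f ξ n y) : ℝ) ≤ ρ * n)
    {b : ℝ} (hEb : (#E : ℝ) ≤ Real.exp (n * b)) :
    wordEntropy f μ ξ n ≤ Real.log 2 + n * (b + d + κ * Real.log (Fintype.card S)) := by
  let W : Finset (Fin n → S) :=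
    E.biUnion fun y => {v | (hammingDist v (word f ξ n y) : ℝ) ≤ ρ * n}
  have hGW : ∀ x ∈ G, word f ξ n x ∈ W := by simpa [W] using hE
  have hWne : W.Nonempty := hGne.imp' (word f ξ n) hGW
  have hW : (#W : ℝ) ≤ Real.exp (n * (b + d)) := calc
    (#W : ℝ) ≤ ∑ y ∈ E, (#{v | (hammingDist v (word f ξ n y) : ℝ) ≤ ρ * n} : ℝ) :=
      mod_cast Finset.card_biUnion_le
    _ ≤ #E * Real.exp (n * d) := by
      simpa using Finset.sum_le_card_nsmul E _ _ fun y _ => hball (word f ξ n y)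
    _ ≤ Real.exp (n * b) * Real.exp (n * d) := by gcongr
    _ = Real.exp (n * (b + d)) := by rw [← Real.exp_add, mul_add]
  calc wordEntropy f μ ξ n
      ≤ Real.log 2 + Real.log #W + κ * (n * Real.log (Fintype.card S)) :=
        wordEntropy_le_of_forall_mem hf hξ hWne hGW hG
    _ ≤ Real.log 2 + n * (b + d) + κ * (n * Real.log (Fintype.card S)) := by
        gcongr
        exact (Real.log_le_iff_le_exp (Nat.cast_pos.2 hWne.card_pos)).2 hW
    _ = _ := by ring

variable [MetricSpace X]

lemma wordEntropy_le_of_forall_isDeltaSep_card_le [DecidableEq S] {μ : Measure X}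
    [IsProbabilityMeasure μ] (hf : Measurable f) (hξ : Measurable ξ) {n : ℕ} {ρ d : ℝ} (hρ : 0 ≤ ρ)
    (hball : ∀ w : Fin n → S, (#{v | (hammingDist v w : ℝ) ≤ ρ * n} : ℝ) ≤ Real.exp (n * d))
    {U : Set X} {ε : ℝ} (hU : ∀ x ∉ U, ∀ y ∉ U, dist x y ≤ ε → ξ x = ξ y) {δ : ℝ}
    (hδ : 3 * δ ≤ ρ) {G : Set X} (hGne : G.Nonempty)
    (hGU : ∀ x ∈ G, birk f (U.indicator 1) n x ≤ δ * n) {κ : ℝ} (hG : μ.real Gᶜ ≤ κ) {b : ℝ}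
    (hsep : ∀ E : Finset X, ↑E ⊆ G → IsDeltaSep f δ n ε ↑E → (#E : ℝ) ≤ Real.exp (n * b)) :
    wordEntropy f μ ξ n ≤ Real.log 2 + n * (b + d + κ * Real.log (Fintype.card S)) := by
  obtain ⟨E, hEG, hE, hmax⟩ := exists_finset_pairwise_maximal
    (r := fun x y => δ * n ≤ (sepCount f ε n x y : ℝ))
    (fun x y h => h.trans_eq (congrArg Nat.cast (sepCount_comm f ε n x y)))
    fun E hEG hE => Nat.le_floor (hsep E hEG hE)
  refine wordEntropy_le_of_forall_exists_hammingDist_le hf hξ hball hGne hG (fun x hx => ?_)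
    (hsep E hEG hE)
  by_cases hxE : x ∈ E
  · exact ⟨x, hxE, by simpa using mul_nonneg hρ n.cast_nonneg⟩
  obtain ⟨y, hy, hxy⟩ := hmax x hx hxE
  refine ⟨y, hy, (hammingDist_word_le hU n x y).trans ?_⟩
  have hmul := mul_le_mul_of_nonneg_right hδ n.cast_nonneg
  linarith [hGU x hx, hGU y (hEG hy), not_le.1 hxy]

theorem exists_forall_mem_nhds_eventually_le_card_of_wordEntropy [CompactSpace X] [BorelSpace X]
    (hf : Measurable f) {ν : ProbabilityMeasure X} (herg : Ergodic f (ν : Measure X))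
    (hξ : Measurable ξ) {a b : ℝ} (hab : a < b)
    (hb : ∀ᶠ n : ℕ in atTop, n * b < wordEntropy f ν ξ n) :
    ∃ ε > 0, ∃ δ > 0, ∀ F ∈ 𝓝 ν, ∀ᶠ n : ℕ in atTop, ∃ E : Finset X,
      ↑E ⊆ Xnf f n F ∧ IsDeltaSep f δ n ε ↑E ∧ Real.exp (n * a) ≤ #E := by
  classical
  obtain ⟨d, hd, hd3⟩ : ∃ d > 0, 3 * d = b - a := ⟨(b - a) / 3, by linarith, by ring⟩
  obtain ⟨ρ, hρ, hball⟩ := exists_forall_card_hammingBall_le_exp S hd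
  obtain ⟨κ, hκ, hκ1, hκd⟩ := exists_pos_lt_one_mul_le (Real.log (Fintype.card S)) hd
  have hη : 0 < ρ / 3 * (κ / 2) := by positivity
  obtain ⟨U, hU, hUη, ε, hε, hξU⟩ := exists_measurableSet_lt_forall_dist_le_imp_eq hξ
    (ν : Measure X) (ENNReal.ofReal_pos.2 hη).ne'
  refine ⟨ε, hε, ρ / 3, by positivity, fun F hF => ?_⟩
  have hlog := (tendsto_natCast_atTop_atTop.atTop_mul_const hd).eventually_ge_atTop (Real.log 2)
  filter_upwards [hb, hlog, eventually_measureReal_compl_le herg hF hU (by positivity) hκ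
    (ENNReal.toReal_le_of_le_ofReal hη.le hUη.le)] with n hbn hlogn hG
  by_contra! hsep
  have hGne : (Xnf f n F ∩ {x | birk f (U.indicator 1) n x < ρ / 3 * n}).Nonempty := by
    by_contra hempty
    rw [not_nonempty_iff_eq_empty.1 hempty, compl_empty, probReal_univ] at hG
    linarith
  have hH := wordEntropy_le_of_forall_isDeltaSep_card_le hf hξ hρ.le (hball n) hξU
    (mul_div_cancel₀ ρ three_ne_zero).le hGne (fun x hx => le_of_lt hx.2) hG
    fun E hEG hE => (hsep E (hEG.trans inter_subset_left) hE).le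
  have hexponent : n * (a + d + κ * Real.log (Fintype.card S)) ≤ n * (a + d + d) := by gcongr
  have hnb : n * b = n * (a + d + d) + n * d := by rw [← mul_add]; congr 1; linarith
  linarith

theorem exists_forall_mem_nhds_eventually_le_card_of_lt_ksEntropy [CompactSpace X] [BorelSpace X]
    (hf : Measurable f) {ν : ProbabilityMeasure X} (herg : Ergodic f (ν : Measure X)) {a : ℝ}
    (ha : a < ksEntropy f (ν : Measure X)) :
    ∃ ε > 0, ∃ δ > 0, ∀ F ∈ 𝓝 ν, ∀ᶠ n : ℕ in atTop, ∃ E : Finset X,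
      ↑E ⊆ Xnf f n F ∧ IsDeltaSep f δ n ε ↑E ∧ Real.exp (n * a) ≤ #E := by
  simp only [ksEntropy, lt_iSup_iff] at ha
  obtain ⟨s, hs, ha⟩ := ha
  obtain ⟨b, hab, hb⟩ := EReal.lt_iff_exists_real_btwn.1 ha
  let : MeasurableSpace s := ⊤
  refine exists_forall_mem_nhds_eventually_le_card_of_wordEntropy hf herg hs.measurable_index
    (EReal.coe_lt_coe_iff.1 hab) ?_
  filter_upwards [eventually_lt_of_lt_liminf hb (by isBoundedDefault), eventually_gt_atTop 0]
    with n hn hn0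
  rw [← dynH_eq_wordEntropy]
  exact (lt_div_iff₀' (Nat.cast_pos.2 hn0)).1 (EReal.coe_lt_coe_iff.1 hn)

end LowerBound

/-! ### Comparison of the pressures -/

section Pressure

lemma inv_mul_log_ofReal_exp {n : ℕ} (hn : n ≠ 0) (c : ℝ) :
    (((n : ℝ)⁻¹ : ℝ) : EReal) * (ENNReal.ofReal (Real.exp (n * c))).log = c := by
  rw [ENNReal.log_ofReal, if_neg (Real.exp_pos _).not_ge, Real.log_exp, ← EReal.coe_mul,
    inv_mul_cancel_left₀ (Nat.cast_ne_zero.2 hn)]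

lemma inv_mul_log_mono (n : ℕ) {P Q : ℝ≥0∞} (h : P ≤ Q) :
    (((n : ℝ)⁻¹ : ℝ) : EReal) * P.log ≤ (((n : ℝ)⁻¹ : ℝ) : EReal) * Q.log :=
  mul_le_mul_of_nonneg_left (ENNReal.log_monotone h)
    (EReal.coe_nonneg.2 (inv_nonneg.2 n.cast_nonneg))

variable {X : Type*} [MetricSpace X] [MeasurableSpace X] {f : X → X} {φ : X → ℝ}
  {F : Set (ProbabilityMeasure X)} {ν : ProbabilityMeasure X} {n : ℕ} {δ ε a b : ℝ}

lemma PsepDelta_le_Psep (f : X → X) (φ : X → ℝ) (F : Set (ProbabilityMeasure X)) (hδ : 0 < δ)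
    (hn : n ≠ 0) (ε : ℝ) : PsepDelta f φ F δ n ε ≤ Psep f φ F n ε :=
  iSup_mono fun _ => iSup_mono' fun h => ⟨⟨h.1, h.2.isNSep hδ hn⟩, le_rfl⟩

lemma Psep_le_ofReal_exp (hφ : ∀ x ∈ Xnf f n F, birk f φ n x ≤ n * b)
    (hcard : ∀ E : Finset X, ↑E ⊆ Xnf f n F → IsNSep f n ε ↑E → (#E : ℝ) ≤ Real.exp (n * a)) :
    Psep f φ F n ε ≤ ENNReal.ofReal (Real.exp (n * (a + b))) := by
  refine iSup₂_le fun E ⟨hEF, hE⟩ => ?_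
  rw [← ENNReal.ofReal_sum_of_nonneg fun x _ => (Real.exp_pos _).le]
  refine ENNReal.ofReal_le_ofReal ?_
  calc ∑ x ∈ E, Real.exp (birk f φ n x) ≤ ∑ _x ∈ E, Real.exp (n * b) :=
        Finset.sum_le_sum fun x hx => Real.exp_le_exp.2 (hφ x (hEF hx))
    _ = #E * Real.exp (n * b) := by rw [Finset.sum_const, nsmul_eq_mul]
    _ ≤ Real.exp (n * a) * Real.exp (n * b) := by gcongr; exact hcard E hEF hE
    _ = Real.exp (n * (a + b)) := by rw [← Real.exp_add, mul_add]

lemma ofReal_exp_le_PsepDelta {E : Finset X} (hEF : ↑E ⊆ Xnf f n F)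
    (hE : IsDeltaSep f δ n ε ↑E) (hcard : Real.exp (n * a) ≤ #E)
    (hφ : ∀ x ∈ E, n * b ≤ birk f φ n x) :
    ENNReal.ofReal (Real.exp (n * (a + b))) ≤ PsepDelta f φ F δ n ε := by
  refine le_iSup₂_of_le E ⟨hEF, hE⟩ ?_
  rw [← ENNReal.ofReal_sum_of_nonneg fun x _ => (Real.exp_pos _).le]
  refine ENNReal.ofReal_le_ofReal ?_
  calc Real.exp (n * (a + b)) = Real.exp (n * a) * Real.exp (n * b) := by
        rw [← Real.exp_add, mul_add]
    _ ≤ #E * Real.exp (n * b) := by gcongr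
    _ = ∑ _x ∈ E, Real.exp (n * b) := by rw [Finset.sum_const, nsmul_eq_mul]
    _ ≤ ∑ x ∈ E, Real.exp (birk f φ n x) :=
        Finset.sum_le_sum fun x hx => Real.exp_le_exp.2 (hφ x hx)

section OpensMeasurable

variable [OpensMeasurableSpace X]

theorem SPlow'_le_SPlow (f : X → X) (φ : X → ℝ) (ν : ProbabilityMeasure X) :
    SPlow' f φ ν ≤ SPlow f φ ν :=
  iSup₂_mono fun ε _ => iSup₂_le fun _ hδ => iInf₂_mono fun F _ =>
    liminf_le_liminf <| (eventually_ne_atTop 0).mono fun n hn =>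
      inv_mul_log_mono n (PsepDelta_le_Psep f φ F hδ hn ε)

theorem SPbar'_le_SPbar (f : X → X) (φ : X → ℝ) (ν : ProbabilityMeasure X) :
    SPbar' f φ ν ≤ SPbar f φ ν :=
  iSup₂_mono fun ε _ => iSup₂_le fun _ hδ => iInf₂_mono fun F _ =>
    limsup_le_limsup <| (eventually_ne_atTop 0).mono fun n hn =>
      inv_mul_log_mono n (PsepDelta_le_Psep f φ F hδ hn ε)

theorem SPlow_le_SPbar (f : X → X) (φ : X → ℝ) (ν : ProbabilityMeasure X) :
    SPlow f φ ν ≤ SPbar f φ ν :=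
  iSup₂_mono fun _ _ => iInf₂_mono fun _ _ => liminf_le_limsup

theorem SPlow'_le_SPbar' (f : X → X) (φ : X → ℝ) (ν : ProbabilityMeasure X) :
    SPlow' f φ ν ≤ SPbar' f φ ν :=
  iSup₂_mono fun _ _ => iSup₂_mono fun _ _ => iInf₂_mono fun _ _ => liminf_le_limsup

lemma exists_mem_nhds_forall_inv_mul_birk_mem [CompactSpace X] (f : X → X) (hφ : Continuous φ)
    {t : Set ℝ} (ht : t ∈ 𝓝 (∫ x, φ x ∂(ν : Measure X))) :
    ∃ F ∈ 𝓝 ν, ∀ n ≠ 0, ∀ x ∈ Xnf f n F, (n : ℝ)⁻¹ * birk f φ n x ∈ t :=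
  ⟨{ρ | ∫ y, φ y ∂(ρ : Measure X) ∈ t},
    (ProbabilityMeasure.continuous_integral_boundedContinuousFunction
      (BoundedContinuousFunction.mkOfCompact ⟨φ, hφ⟩)).continuousAt ht,
    fun _ hn _ => (mem_Xnf_setOf_integral_mem hn hφ.stronglyMeasurable).1⟩

end OpensMeasurable

variable [CompactSpace X] [BorelSpace X]

theorem SPbar_le_ksEntropy_add_integral (hf : Continuous f) (hφ : Continuous φ)
    (hν : MeasurePreserving f (ν : Measure X) ν) :
    SPbar f φ ν ≤ ksEntropy f (ν : Measure X) + ((∫ x, φ x ∂(ν : Measure X) : ℝ) : EReal) := by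
  refine iSup₂_le fun ε hε => EReal.le_of_forall_lt_iff_le.1 fun c hc => ?_
  obtain ⟨a, ha, hac⟩ := EReal.lt_iff_exists_real_btwn.1 ((EReal.lt_sub_iff_add_lt
    (.inl (EReal.coe_ne_bot _)) (.inl (EReal.coe_ne_top _))).2 hc)
  rw [← EReal.coe_sub, EReal.coe_lt_coe_iff, lt_sub_comm] at hac
  obtain ⟨F₁, hF₁, hcard⟩ := exists_mem_nhds_eventually_card_le_of_ksEntropy_lt hf hν ha hε
  obtain ⟨F₂, hF₂, hbirk⟩ := exists_mem_nhds_forall_inv_mul_birk_mem f hφ (Iio_mem_nhds hac)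
  refine iInf₂_le_of_le (F₁ ∩ F₂) (inter_mem hF₁ hF₂) (limsup_le_of_le (by isBoundedDefault) ?_)
  filter_upwards [hcard, eventually_ne_atTop 0] with n hn hn0
  rw [← inv_mul_log_ofReal_exp hn0 c, ← add_sub_cancel a c]
  refine inv_mul_log_mono n (Psep_le_ofReal_exp (fun x hx => ?_)
    fun E hE => hn E (hE.trans (Xnf_mono inter_subset_left)))
  have hx' : (n : ℝ)⁻¹ * birk f φ n x < c - a := hbirk n hn0 x (Xnf_mono inter_subset_right hx)
  exact (inv_mul_le_iff₀ (Nat.cast_pos.2 (Nat.pos_of_ne_zero hn0))).1 hx'.le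

theorem ksEntropy_add_integral_le_SPlow' (hf : Measurable f) (hφ : Continuous φ)
    (herg : Ergodic f (ν : Measure X)) :
    ksEntropy f (ν : Measure X) + ((∫ x, φ x ∂(ν : Measure X) : ℝ) : EReal) ≤ SPlow' f φ ν := by
  refine EReal.ge_of_forall_gt_iff_ge.1 fun c hc => ?_
  obtain ⟨a, hca, ha⟩ := EReal.lt_iff_exists_real_btwn.1 (EReal.sub_lt_of_lt_add hc)
  rw [← EReal.coe_sub, EReal.coe_lt_coe_iff, sub_lt_comm] at hca
  obtain ⟨ε, hε, δ, hδ, hcard⟩ :=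
    exists_forall_mem_nhds_eventually_le_card_of_lt_ksEntropy hf herg ha
  obtain ⟨F₂, hF₂, hbirk⟩ := exists_mem_nhds_forall_inv_mul_birk_mem f hφ (Ioi_mem_nhds hca)
  refine le_iSup₂_of_le ε hε (le_iSup₂_of_le δ hδ (le_iInf₂ fun F₁ hF₁ =>
    le_liminf_of_le (by isBoundedDefault) ?_))
  filter_upwards [hcard _ (inter_mem hF₁ hF₂), eventually_ne_atTop 0] with n ⟨E, hEF, hE, hn⟩ hn0
  rw [← inv_mul_log_ofReal_exp hn0 c, ← add_sub_cancel a c]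
  refine inv_mul_log_mono n (ofReal_exp_le_PsepDelta
    (hEF.trans (Xnf_mono inter_subset_left)) hE hn fun x hx => ?_)
  have hx' : c - a < (n : ℝ)⁻¹ * birk f φ n x :=
    hbirk n hn0 x (Xnf_mono inter_subset_right (hEF hx))
  exact (le_inv_mul_iff₀ (Nat.cast_pos.2 (Nat.pos_of_ne_zero hn0))).1 hx'.le

end Pressure

end Paper

/-- Theorem 4.9: for any ergodic measure `μ`, the measure theoretic pressures defined
via `(n,ε)`-separated and `(δ,n,ε)`-separated sets all exist (upper and lower versions
coincide) and equal the free energy `h_μ(f) + ∫φ dμ`. -/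
theorem SP_eq_free_energy_of_ergodic {X : Type*} [MetricSpace X] [CompactSpace X] [MeasurableSpace X] [BorelSpace X]
    (f : X → X) (hf : Continuous f) (φ : X → ℝ) (hφ : Continuous φ)
    (μ : Measure X) (hp : IsProbabilityMeasure μ) (herg : Ergodic f μ) :
    SPbar f φ (⟨μ, hp⟩ : MeasureTheory.ProbabilityMeasure X) =
        ksEntropy f μ + ((∫ x, φ x ∂μ : ℝ) : EReal) ∧
    SPlow f φ (⟨μ, hp⟩ : MeasureTheory.ProbabilityMeasure X) =
        ksEntropy f μ + ((∫ x, φ x ∂μ : ℝ) : EReal) ∧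
    SPbar' f φ (⟨μ, hp⟩ : MeasureTheory.ProbabilityMeasure X) =
        ksEntropy f μ + ((∫ x, φ x ∂μ : ℝ) : EReal) ∧
    SPlow' f φ (⟨μ, hp⟩ : MeasureTheory.ProbabilityMeasure X) =
        ksEntropy f μ + ((∫ x, φ x ∂μ : ℝ) : EReal) := by
  obtain ⟨ν, rfl⟩ : ∃ ν : ProbabilityMeasure X, (ν : Measure X) = μ := ⟨⟨μ, hp⟩, rfl⟩
  have hupper := SPbar_le_ksEntropy_add_integral hf hφ herg.toMeasurePreserving
  have hlower := ksEntropy_add_integral_le_SPlow' hf.measurable hφ herg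
  have hlow := SPlow'_le_SPlow f φ ν
  have hbar := SPbar'_le_SPbar f φ ν
  have hsep := SPlow_le_SPbar f φ ν
  have hsep' := SPlow'_le_SPbar' f φ ν
  exact ⟨hupper.antisymm (hlower.trans (hlow.trans hsep)),
    (hsep.trans hupper).antisymm (hlower.trans hlow),
    (hbar.trans hupper).antisymm (hlower.trans hsep'),
    (hsep'.trans (hbar.trans hupper)).antisymm hlower⟩
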